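/- Let ε_1, …, ε_n be independent Rademacher random variables. For every n ≥ 1 and every real p ≥ 1, the function Φ(t_1, …, t_n) = log E|e^{t_1}ε_1 + … + e^{t_n}ε_n|^p is convex on ℝ^n. -/

import Mathlib

open Finset

/-!
The moment `F(x) = E‖∑ x_j ε_j v_j‖^p` is a convex function of `x`, invariant under sign changes
of the coordinates of `x`, hence nondecreasing in each `|x_j|`; as `exp` is convex,
`G(t) = F(e^{t_1}, …, e^{t_n})` is again (quasi)convex. Moreover `F` is homogeneous of degree `p`,
so translating `t` along the vector `(1/p, …, 1/p)` multiplies `G` by an exponential. Every `t` can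
thus be translated to the level set `{G = 1}`, by an amount proportional to `log G(t)`, and the
convexity of the single sublevel set `{G ≤ 1}` says that `log G` is convex.
-/

section Unconditional

variable {ι β : Type*} [DecidableEq ι]

/-- A function on `ι → ℝ` is unconditional if it is invariant under sign changes of the
coordinates. Only one coordinate is flipped at a time, which for finite `ι` is enough. -/
def IsUnconditional (F : (ι → ℝ) → β) : Prop :=
  ∀ x i, F (Function.update x i (-x i)) = F x

namespace IsUnconditional

variable [Preorder β] {F : (ι → ℝ) → β}

theorem update_le_of_abs_le (hF : IsUnconditional F) (hconv : QuasiconvexOn ℝ Set.univ F)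
    {x : ι → ℝ} {i : ι} {c : ℝ} (hc : |c| ≤ |x i|) : F (Function.update x i c) ≤ F x := by
  have hcoord : c ∈ segment ℝ (x i) (-x i) := by
    rw [segment_symm, segment_eq_uIcc, Set.mem_uIcc]
    rcases abs_cases (x i) with ⟨h, -⟩ | ⟨h, -⟩ <;> rw [h, abs_le] at hc
    · exact .inl hc
    · exact .inr ⟨by linarith, hc.2⟩
  have hmem : Function.update x i c ∈ segment ℝ x (Function.update x i (-x i)) := by
    have himage := Pi.image_update_segment (𝕜 := ℝ) i (x i) (-x i) x
    rw [Function.update_eq_self] at himage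
    exact himage ▸ Set.mem_image_of_mem _ hcoord
  exact ((hconv (F x)).segment_subset ⟨Set.mem_univ _, le_rfl⟩
    ⟨Set.mem_univ _, (hF x i).le⟩ hmem).2

theorem le_of_abs_le_abs [Finite ι] (hF : IsUnconditional F) (hconv : QuasiconvexOn ℝ Set.univ F)
    {x y : ι → ℝ} (hxy : |x| ≤ |y|) : F x ≤ F y := by
  cases nonempty_fintype ι
  suffices ∀ S : Finset ι, F (S.piecewise x y) ≤ F y by simpa using this univ
  intro S
  induction S using Finset.induction_on with
  | empty => simp
  | insert i S hi ih =>
    rw [piecewise_insert]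
    refine (hF.update_le_of_abs_le hconv ?_).trans ih
    rw [piecewise_eq_of_notMem _ _ _ hi]
    exact hxy i

theorem quasiconvexOn_comp_exp [Finite ι] (hF : IsUnconditional F)
    (hconv : QuasiconvexOn ℝ Set.univ F) :
    QuasiconvexOn ℝ Set.univ fun t : ι → ℝ => F fun i => Real.exp (t i) := by
  rintro r x ⟨-, hx⟩ y ⟨-, hy⟩ a b ha hb hab
  refine ⟨Set.mem_univ _, (hF.le_of_abs_le_abs hconv fun i => ?_).trans
    (hconv r ⟨Set.mem_univ _, hx⟩ ⟨Set.mem_univ _, hy⟩ ha hb hab).2⟩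
  exact abs_le_abs_of_nonneg (Real.exp_pos _).le
    (convexOn_exp.2 (Set.mem_univ (x i)) (Set.mem_univ (y i)) ha hb hab)

end IsUnconditional

end Unconditional

theorem convexOn_log_of_map_add_smul {V : Type*} [AddCommGroup V] [Module ℝ V] {G : V → ℝ} {u : V}
    (hG : QuasiconvexOn ℝ Set.univ G) (hpos : ∀ t, 0 < G t)
    (hu : ∀ t (a : ℝ), G (t + a • u) = Real.exp a * G t) :
    ConvexOn ℝ Set.univ fun t => Real.log (G t) := by
  refine ⟨convex_univ, fun x _ y _ a b ha hb hab => ?_⟩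
  let normalize (t : V) : V := t + (-Real.log (G t)) • u
  have normalize_mem (t : V) : normalize t ∈ {t ∈ Set.univ | G t ≤ 1} :=
    ⟨Set.mem_univ _, by rw [hu, Real.exp_neg, Real.exp_log (hpos t), inv_mul_cancel₀ (hpos t).ne']⟩
  have hle : G (a • normalize x + b • normalize y) ≤ 1 :=
    (hG 1 (normalize_mem x) (normalize_mem y) ha hb hab).2
  have hcomb : a • x + b • y = a • normalize x + b • normalize y
      + (a • Real.log (G x) + b • Real.log (G y)) • u := by
    simp only [normalize]
    module
  rw [Real.log_le_iff_le_exp (hpos _), hcomb, hu]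
  exact mul_le_of_le_one_right (Real.exp_pos _).le hle

theorem convexOn_finset_sum {V κ : Type*} [AddCommGroup V] [Module ℝ V] {s : Set V}
    (hs : Convex ℝ s) (S : Finset κ) {f : κ → V → ℝ} (hf : ∀ k ∈ S, ConvexOn ℝ s (f k)) :
    ConvexOn ℝ s fun x => ∑ k ∈ S, f k x := by
  rw [← sum_fn]
  exact sum_induction f (ConvexOn ℝ s) (fun _ _ => ConvexOn.add) (convexOn_const 0 hs) hf

theorem convexOn_norm_rpow {E : Type*} [SeminormedAddCommGroup E] [NormedSpace ℝ E] {p : ℝ}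
    (hp : 1 ≤ p) : ConvexOn ℝ Set.univ fun x : E => ‖x‖ ^ p := by
  refine ⟨convex_univ, fun x hx y hy a b ha hb hab => ?_⟩
  calc
    ‖a • x + b • y‖ ^ p ≤ (a • ‖x‖ + b • ‖y‖) ^ p := by
      gcongr
      exact convexOn_univ_norm.2 hx hy ha hb hab
    _ ≤ a • ‖x‖ ^ p + b • ‖y‖ ^ p :=
      (convexOn_rpow hp).2 (norm_nonneg x) (norm_nonneg y) ha hb hab

section SignedCombination

variable {ι E : Type*} [Fintype ι] [AddCommGroup E] [Module ℝ E]

/-- The signed combination `∑ j, ± x j • v j`, as a linear map in the coefficients `x`; the sign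
pattern is encoded by `s`, with `true` for `+1` and `false` for `-1`. -/
def signedCombination (v : ι → E) (s : ι → Bool) : (ι → ℝ) →ₗ[ℝ] E :=
  Fintype.linearCombination ℝ fun j => (if s j then (1 : ℝ) else -1) • v j

variable {v : ι → E}

theorem signedCombination_update_not [DecidableEq ι] (s : ι → Bool) (x : ι → ℝ) (i : ι) :
    signedCombination v (Function.update s i (!s i)) x =
      signedCombination v s (Function.update x i (-x i)) := by
  simp only [signedCombination, Fintype.linearCombination_apply]
  refine sum_congr rfl fun j _ => ?_
  obtain rfl | hj := eq_or_ne j i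
  · cases s j <;> simp
  · simp [hj]

theorem exists_signedCombination_ne_zero {x : ι → ℝ} {i : ι} (hx : x i ≠ 0) (hv : v i ≠ 0) :
    ∃ s, signedCombination v s x ≠ 0 := by
  classical
  by_contra! hzero
  have hsingle : Pi.single i (2 * x i) = x - Function.update x i (-x i) := by
    ext j
    obtain rfl | hj := eq_or_ne j i
    · simp [two_mul]
    · simp [hj]
  have hdiff : signedCombination v (fun _ => true) (Pi.single i (2 * x i)) = 0 := by
    rw [hsingle, map_sub, ← signedCombination_update_not, hzero, hzero, sub_zero]
  simp [signedCombination, hx, hv] at hdiff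

end SignedCombination

section RademacherMoment

variable {ι E : Type*} [Fintype ι] [DecidableEq ι] [NormedAddCommGroup E] [NormedSpace ℝ E]
  {v : ι → E} {p : ℝ}

/-- The `p`-th moment `E‖∑ j, x j ε_j v j‖ ^ p` of a Rademacher sum with coefficients `x` and
vectors `v`, the expectation being the average over all sign patterns. -/
noncomputable def rademacherMoment (v : ι → E) (p : ℝ) (x : ι → ℝ) : ℝ :=
  (2 ^ Fintype.card ι : ℝ)⁻¹ * ∑ s : ι → Bool, ‖signedCombination v s x‖ ^ p

theorem isUnconditional_rademacherMoment : IsUnconditional (rademacherMoment v p) := by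
  intro x i
  have hflip : Function.Involutive fun s : ι → Bool => Function.update s i (!s i) := by
    intro s
    simp
  simp only [rademacherMoment, ← signedCombination_update_not]
  congr 1
  exact Equiv.sum_comp hflip.toPerm fun s => ‖signedCombination v s x‖ ^ p

theorem convexOn_rademacherMoment (hp : 1 ≤ p) : ConvexOn ℝ Set.univ (rademacherMoment v p) := by
  have hsum := convexOn_finset_sum convex_univ univ fun (s : ι → Bool) _ =>
    (convexOn_norm_rpow hp).comp_linearMap (signedCombination v s)
  exact hsum.smul (by positivity)

theorem rademacherMoment_smul (c : ℝ) (x : ι → ℝ) :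
    rademacherMoment v p (c • x) = |c| ^ p * rademacherMoment v p x := by
  simp only [rademacherMoment, map_smul, norm_smul, Real.norm_eq_abs,
    Real.mul_rpow (abs_nonneg c) (norm_nonneg _), ← mul_sum]
  exact mul_left_comm _ _ _

theorem rademacherMoment_pos {x : ι → ℝ} {i : ι} (hx : x i ≠ 0) (hv : v i ≠ 0) :
    0 < rademacherMoment v p x := by
  obtain ⟨s, hs⟩ := exists_signedCombination_ne_zero hx hv
  exact mul_pos (by positivity) (sum_pos' (fun _ _ => by positivity)
    ⟨s, mem_univ s, Real.rpow_pos_of_pos (norm_pos_iff.2 hs) p⟩)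

theorem rademacherMoment_exp_add_smul (hp : p ≠ 0) (t : ι → ℝ) (a : ℝ) :
    rademacherMoment v p (fun j => Real.exp ((t + a • Function.const ι p⁻¹) j)) =
      Real.exp a * rademacherMoment v p fun j => Real.exp (t j) := by
  have hexp : (fun j => Real.exp ((t + a • Function.const ι p⁻¹) j)) =
      Real.exp (a * p⁻¹) • fun j => Real.exp (t j) := by
    ext j
    simp [Real.exp_add, mul_comm]
  rw [hexp, rademacherMoment_smul, Real.abs_exp, ← Real.exp_mul, inv_mul_cancel_right₀ hp]

theorem log_moment_rademacher_convex_general (hv : v ≠ 0) (hp : 1 ≤ p) :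
    ConvexOn ℝ Set.univ fun t : ι → ℝ =>
      Real.log (rademacherMoment v p fun j => Real.exp (t j)) := by
  obtain ⟨i, hi⟩ := Function.ne_iff.1 hv
  exact convexOn_log_of_map_add_smul
    (isUnconditional_rademacherMoment.quasiconvexOn_comp_exp
      (convexOn_rademacherMoment hp).quasiconvexOn)
    (fun t => rademacherMoment_pos (Real.exp_ne_zero (t i)) hi)
    (rademacherMoment_exp_add_smul (zero_lt_one.trans_le hp).ne')

end RademacherMoment

/-- For independent Rademacher signs `ε_1, …, ε_n` (modelled by the uniform measure on
`{-1,1}^n`, encoded via `Fin n → Bool`) and `p ≥ 1`, the function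
`Φ(t) = log E|e^{t_1}ε_1 + … + e^{t_n}ε_n|^p` is convex on `ℝ^n`. -/
theorem log_moment_rademacher_convex (n : ℕ) (hn : 1 ≤ n) (p : ℝ) (hp : 1 ≤ p) :
    ConvexOn ℝ Set.univ (fun t : Fin n → ℝ =>
      Real.log ((2 ^ n : ℝ)⁻¹ *
        ∑ s : Fin n → Bool,
          |∑ j, Real.exp (t j) * (if s j then (1 : ℝ) else -1)| ^ p)) := by
  have hv : (1 : Fin n → ℝ) ≠ 0 := Function.ne_iff.2 ⟨⟨0, hn⟩, one_ne_zero⟩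
  simpa [rademacherMoment, signedCombination, Fintype.linearCombination_apply] using
    log_moment_rademacher_convex_general hv hp
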